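/- arXiv:1906.05204 — 2 statements merged into one kernel-verified Lean document; each statement's English description precedes it below -/
import Mathlib

section
/- Let G : ℝ → ℝ be convex and let Y₀ ≤ y₀ ≤ Y₁ ≤ Y₂ ≤ … ≤ Y_r ≤ y* ≤ Y_{r+1} be real numbers (r ≥ 0). Suppose 0 is a subgradient of G at y₀, for each k = 1,…,r+1 the number U_k is a subgradient of G at Y_k, and U₁ ≥ 0. Then G(y*) − G(y₀) ≤ Σ_{k=1}^{r} U_k·(Y_k − Y_{k−1}) + U_{r+1}·(y* − Y_r). -/
/-- Data-driven bracketing estimate: given `Y 0 ≤ y₀ ≤ Y 1 ≤ ⋯ ≤ Y r ≤ y* ≤ Y (r+1)`, with `0`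
a subgradient of the convex `G` at `y₀`, `U k` a subgradient at `Y k` for `k = 1,…,r+1`, and
`U 1 ≥ 0`, one has `G y* - G y₀ ≤ ∑_{k=1}^r U k (Y k - Y (k-1)) + U (r+1) (y* - Y r)`. -/
theorem stmt_6 (G : ℝ → ℝ) (hG : ConvexOn ℝ Set.univ G)
    (r : ℕ) (Y U : ℕ → ℝ) (y₀ ystar : ℝ)
    (hY0 : Y 0 ≤ y₀) (hy₀Y1 : y₀ ≤ Y 1)
    (hchain : ∀ k, 1 ≤ k → k < r → Y k ≤ Y (k + 1))
    (hYr : Y r ≤ ystar) (hstarY : ystar ≤ Y (r + 1)) (hy₀star : y₀ ≤ ystar)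
    (h0 : ∀ z : ℝ, G y₀ ≤ G z)
    (hU : ∀ k, 1 ≤ k → k ≤ r + 1 → ∀ z : ℝ, G (Y k) + U k * (z - Y k) ≤ G z)
    (hU1 : 0 ≤ U 1) :
    G ystar - G y₀ ≤
      (∑ k ∈ Finset.Icc 1 r, U k * (Y k - Y (k - 1))) + U (r + 1) * (ystar - Y r) := by
  have key : ∀ a b c u : ℝ, a ≤ b → b ≤ c → (∀ z : ℝ, G c + u * (z - c) ≤ G z) →
      G b - G a ≤ u * (b - a) := by
    intro a b c u hab hbc hu
    rcases (hab.trans hbc).eq_or_lt with h | h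
    · have : b = a := le_antisymm (h ▸ hbc) hab
      subst this
      simp
    · have hca : 0 < c - a := sub_pos.2 h
      have hc := hG.2 (Set.mem_univ a) (Set.mem_univ c)
        (div_nonneg (sub_nonneg.2 hbc) hca.le) (div_nonneg (sub_nonneg.2 hab) hca.le)
        (by field_simp; ring)
      simp only [smul_eq_mul] at hc
      have e : (c - b) / (c - a) * a + (b - a) / (c - a) * c = b := by field_simp; ring
      rw [e] at hc
      have e2 : (c - b) / (c - a) = 1 - (b - a) / (c - a) := by field_simp; ring
      rw [e2] at hc
      have h1 : G c - G a ≤ u * (c - a) := by linarith [hu a]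
      have h2 := mul_le_mul_of_nonneg_left h1 (div_nonneg (sub_nonneg.2 hab) hca.le)
      have e3 : (b - a) / (c - a) * (u * (c - a)) = u * (b - a) := by field_simp
      linarith
  have main : ∀ m, m + 1 ≤ r →
      G (Y (m + 1)) - G y₀ ≤ ∑ k ∈ Finset.Icc 1 (m + 1), U k * (Y k - Y (k - 1)) := by
    intro m
    induction m with
    | zero =>
      intro _
      have h := hU 1 le_rfl (by omega) y₀
      have h2 := mul_nonneg hU1 (sub_nonneg.2 hY0)
      simp only [zero_add, Finset.Icc_self, Finset.sum_singleton, Nat.sub_self]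
      linarith
    | succ m ih =>
      intro hm
      rw [Finset.sum_Icc_succ_top (by omega)]
      have h := hU (m + 1 + 1) (by omega) (by omega) (Y (m + 1))
      have h1 := ih (by omega)
      simp only [Nat.add_sub_cancel]
      linarith
  cases r with
  | zero =>
    have h := key y₀ ystar (Y 1) (U 1) hy₀star hstarY (hU 1 le_rfl (by omega))
    have h2 := mul_nonneg hU1 (sub_nonneg.2 hY0)
    simp only [zero_add, Finset.Icc_eq_empty_of_lt Nat.zero_lt_one, Finset.sum_empty]
    linarith
  | succ m =>
    have h := key _ _ _ _ hYr hstarY (hU (m + 1 + 1) (by omega) le_rfl)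
    have h1 := main m le_rfl
    linarith
end

section
/- Let F, h : ℝ → ℝ be continuous and strictly increasing, and assume that lim_{|x|→∞} |F(x)| = ∞ or lim_{|x|→∞} |h(x)| = ∞. Define the relation R = {(F(σ), h(σ)) : σ ∈ ℝ} ⊆ ℝ². Then: (i) R is monotone, i.e. for any (u₁, y₁), (u₂, y₂) ∈ R, u₁ < u₂ implies y₁ ≤ y₂; and (ii) R is maximally monotone, i.e. for any point (u, y) ∈ ℝ² such that R ∪ {(u, y)} is monotone, one has (u, y) ∈ R. -/
/-- A subset `A ⊆ ℝ²` is a monotone relation if `u₁ < u₂` implies `y₁ ≤ y₂` for any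
`(u₁, y₁), (u₂, y₂) ∈ A`. -/
def MonotoneRel (A : Set (ℝ × ℝ)) : Prop :=
  ∀ p ∈ A, ∀ q ∈ A, p.1 < q.1 → p.2 ≤ q.2

theorem surj_aux (F : ℝ → ℝ) (hFc : Continuous F) (hF : StrictMono F)
    (hinf : Filter.Tendsto (fun x => |F x|) (Filter.cocompact ℝ) Filter.atTop) (c : ℝ) :
    ∃ x, F x = c := by
  have h1 : Filter.Tendsto (fun x => |F x|) Filter.atTop Filter.atTop :=
    hinf.mono_left atTop_le_cocompact
  have h2 : Filter.Tendsto (fun x => |F x|) Filter.atBot Filter.atTop :=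
    hinf.mono_left atBot_le_cocompact
  obtain ⟨a, ha, ha0⟩ := ((h1.eventually_gt_atTop (|c| + |F 0|)).and
    (Filter.eventually_ge_atTop 0)).exists
  obtain ⟨b, hb, hb0⟩ := ((h2.eventually_gt_atTop (|c| + |F 0|)).and
    (Filter.eventually_le_atBot 0)).exists
  have ha1 := hF.monotone ha0
  have hb1 := hF.monotone hb0
  have e1 := le_abs_self c
  have e2 := neg_abs_le c
  have e3 := le_abs_self (F 0)
  have e4 := neg_abs_le (F 0)
  have e5 := abs_nonneg c
  apply mem_range_of_exists_le_of_exists_ge hFc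
  · refine ⟨b, ?_⟩
    rcases abs_cases (F b) with ⟨h, _⟩ | ⟨h, _⟩ <;> linarith
  · refine ⟨a, ?_⟩
    rcases abs_cases (F a) with ⟨h, _⟩ | ⟨h, _⟩ <;> linarith

/-- For `F, h : ℝ → ℝ` continuous and strictly increasing with `|F| → ∞` or `|h| → ∞` as
`|x| → ∞`, the relation `R = {(F σ, h σ) : σ ∈ ℝ}` is monotone and maximally monotone. -/
theorem stmt_8 (F h : ℝ → ℝ) (hFc : Continuous F) (hFmono : StrictMono F)
    (hhc : Continuous h) (hhmono : StrictMono h)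
    (hinf : Filter.Tendsto (fun x => |F x|) (Filter.cocompact ℝ) Filter.atTop ∨
      Filter.Tendsto (fun x => |h x|) (Filter.cocompact ℝ) Filter.atTop) :
    MonotoneRel {p : ℝ × ℝ | ∃ σ : ℝ, p = (F σ, h σ)} ∧
      ∀ u y : ℝ, MonotoneRel ({p : ℝ × ℝ | ∃ σ : ℝ, p = (F σ, h σ)} ∪ {(u, y)}) →
        (u, y) ∈ {p : ℝ × ℝ | ∃ σ : ℝ, p = (F σ, h σ)} := by
  constructor
  · rintro _ ⟨a, rfl⟩ _ ⟨b, rfl⟩ hab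
    exact hhmono.monotone (hFmono.lt_iff_lt.1 hab).le
  · intro u y hm
    have hA : ∀ t, F t < u → h t ≤ y := fun t ht =>
      hm (F t, h t) (Or.inl ⟨t, rfl⟩) (u, y) (Or.inr rfl) ht
    have hB : ∀ t, u < F t → y ≤ h t := fun t ht =>
      hm (u, y) (Or.inr rfl) (F t, h t) (Or.inl ⟨t, rfl⟩) ht
    rcases hinf with hi | hi
    · obtain ⟨s, rfl⟩ := surj_aux F hFc hFmono hi u
      refine ⟨s, Prod.ext rfl (le_antisymm ?_ ?_)⟩
      · refine ge_of_tendsto (f := h) (x := nhdsWithin s (Set.Ioi s))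
          (hhc.continuousAt.tendsto.mono_left nhdsWithin_le_nhds) ?_
        exact Filter.mem_of_superset self_mem_nhdsWithin fun t ht => hB t (hFmono ht)
      · refine le_of_tendsto (f := h) (x := nhdsWithin s (Set.Iio s))
          (hhc.continuousAt.tendsto.mono_left nhdsWithin_le_nhds) ?_
        exact Filter.mem_of_superset self_mem_nhdsWithin fun t ht => hA t (hFmono ht)
    · obtain ⟨s, rfl⟩ := surj_aux h hhc hhmono hi y
      refine ⟨s, Prod.ext (le_antisymm ?_ ?_) rfl⟩
      · refine ge_of_tendsto (f := F) (x := nhdsWithin s (Set.Ioi s))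
          (hFc.continuousAt.tendsto.mono_left nhdsWithin_le_nhds) ?_
        exact Filter.mem_of_superset self_mem_nhdsWithin fun t ht =>
          not_lt.1 fun hc => absurd (hA t hc) (not_le.2 (hhmono ht))
      · refine le_of_tendsto (f := F) (x := nhdsWithin s (Set.Iio s))
          (hFc.continuousAt.tendsto.mono_left nhdsWithin_le_nhds) ?_
        exact Filter.mem_of_superset self_mem_nhdsWithin fun t ht =>
          not_lt.1 fun hc => absurd (hB t hc) (not_le.2 (hhmono ht))
end
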